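/- arXiv:2311.05986 — 2 statements merged into one kernel-verified Lean document; each statement's English description precedes it below -/
import Mathlib

section
/- For every finite simple undirected graph G with l ≥ 1 edges and every partition η of its vertices into communities, the modularity satisfies Q(η) ≥ −1/2. -/
open scoped Classical

/-!
Let `m` be the total weight. A community whose rows weigh `a` and whose columns weigh `b`
contributes `e - a * b / m` to `m * Q`, where `e` is the weight of its block. Besides `0 ≤ e`,
inclusion–exclusion on rows and columns gives `a + b - m ≤ e`, and these two bounds already force
`e - a * b / m ≥ -(a + b) / 4`. Summed over the communities, `a` and `b` both total `m`, whence
`m * Q ≥ -m / 2`.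
-/

section Modularity

open Finset

variable {I J L R : Type*}

theorem sum_sum_mul_ite_eq_sum_fibers [Fintype I] [Fintype J] [NonAssocSemiring R]
    (f : I → J → R) {η : I → L} {ξ : J → L} {S : Finset L} (hη : ∀ i, η i ∈ S) :
    ∑ i, ∑ j, f i j * (if η i = ξ j then 1 else 0) =
      ∑ c ∈ S, ∑ i with η i = c, ∑ j with ξ j = c, f i j := by
  rw [← sum_fiberwise_of_maps_to fun i _ ↦ hη i]
  refine sum_congr rfl fun c _ ↦ sum_congr rfl fun i hi ↦ ?_
  simp only [mul_ite, mul_one, mul_zero, (mem_filter.mp hi).2, sum_filter, eq_comm]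

/-- The total weight `e(s, t)` of the entries of `A` with row in `s` and column in `t`. Taking
`t = univ` (respectively `s = univ`) gives the total out-degree of `s` (respectively the total
in-degree of `t`). -/
def blockWeight [AddCommMonoid R] (A : I → J → R) (s : Finset I) (t : Finset J) : R :=
  ∑ i ∈ s, ∑ j ∈ t, A i j

section Fibers

variable [AddCommMonoid R] (A : I → J → R)

theorem blockWeight_comm (s : Finset I) (t : Finset J) :
    blockWeight A s t = ∑ j ∈ t, ∑ i ∈ s, A i j :=
  sum_comm

theorem sum_blockWeight_row_fibers [Fintype I] {η : I → L} {S : Finset L} (hη : ∀ i, η i ∈ S)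
    (t : Finset J) :
    ∑ c ∈ S, blockWeight A {i | η i = c} t = blockWeight A univ t :=
  sum_fiberwise_of_maps_to (fun i _ ↦ hη i) _

theorem sum_blockWeight_col_fibers [Fintype J] {ξ : J → L} {S : Finset L} (hξ : ∀ j, ξ j ∈ S)
    (s : Finset I) :
    ∑ c ∈ S, blockWeight A s {j | ξ j = c} = blockWeight A s univ := by
  simp only [blockWeight_comm A s]
  exact sum_fiberwise_of_maps_to (fun j _ ↦ hξ j) _

end Fibers

section Order

variable [AddCommMonoid R] [PartialOrder R] [IsOrderedAddMonoid R] {A : I → J → R}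

theorem blockWeight_nonneg (hA : ∀ i j, 0 ≤ A i j) (s : Finset I) (t : Finset J) :
    0 ≤ blockWeight A s t :=
  sum_nonneg fun i _ ↦ sum_nonneg fun j _ ↦ hA i j

theorem blockWeight_mono (hA : ∀ i j, 0 ≤ A i j) {s s' : Finset I} {t t' : Finset J}
    (hs : s ⊆ s') (ht : t ⊆ t') : blockWeight A s t ≤ blockWeight A s' t' :=
  calc
    blockWeight A s t ≤ blockWeight A s t' :=
      sum_le_sum fun i _ ↦ sum_le_sum_of_subset_of_nonneg ht fun j _ _ ↦ hA i j
    _ ≤ blockWeight A s' t' :=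
      sum_le_sum_of_subset_of_nonneg hs fun i _ _ ↦ sum_nonneg fun j _ ↦ hA i j

theorem blockWeight_add_blockWeight_le [Fintype I] [Fintype J] (hA : ∀ i j, 0 ≤ A i j)
    (s : Finset I) (t : Finset J) :
    blockWeight A s univ + blockWeight A univ t ≤
      blockWeight A s t + blockWeight A univ univ := by
  have rows (u : Finset J) : blockWeight A s u + blockWeight A sᶜ u = blockWeight A univ u :=
    sum_add_sum_compl s _
  have outside_rows : blockWeight A sᶜ t ≤ blockWeight A sᶜ univ :=
    blockWeight_mono hA Subset.rfl (subset_univ t)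
  calc
    blockWeight A s univ + blockWeight A univ t
      = blockWeight A s t + (blockWeight A s univ + blockWeight A sᶜ t) := by
        rw [← rows t, add_left_comm]
    _ ≤ blockWeight A s t + (blockWeight A s univ + blockWeight A sᶜ univ) := by gcongr
    _ = blockWeight A s t + blockWeight A univ univ := by rw [rows univ]

end Order

section Field

variable [Field R]

theorem sum_sum_sub_mul_div (A : I → J → R) (kRow : I → R) (kCol : J → R) (m : R)
    (s : Finset I) (t : Finset J) :
    ∑ i ∈ s, ∑ j ∈ t, (A i j - kRow i * kCol j / m) =
      blockWeight A s t - (∑ i ∈ s, kRow i) * (∑ j ∈ t, kCol j) / m := by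
  simp only [blockWeight, sum_sub_distrib, sum_mul_sum, sum_div]

variable [LinearOrder R] [IsStrictOrderedRing R]

theorem mul_div_le_add_add_div_four {a b e m : R} (hm : 0 < m) (hab : 0 ≤ a + b)
    (hab' : a + b ≤ 4 * m) (he : 0 ≤ e) (he' : a + b ≤ e + m) :
    a * b / m ≤ e + (a + b) / 4 := by
  rw [div_le_iff₀ hm]
  have amgm : 4 * (a * b) ≤ (a + b) ^ 2 := by linarith [four_mul_le_sq_add a b]
  have quadratic : (a + b) ^ 2 ≤ (4 * e + (a + b)) * m := by
    rcases le_total (a + b) m with h | h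
    · calc
        (a + b) ^ 2 = (a + b) * (a + b) := sq _
        _ ≤ (a + b) * m := by gcongr
        _ ≤ (4 * e + (a + b)) * m := mul_le_mul_of_nonneg_right (by linarith) hm.le
    · have between_roots : 0 ≤ (a + b - m) * (4 * m - (a + b)) :=
        mul_nonneg (sub_nonneg.mpr h) (sub_nonneg.mpr hab')
      calc
        (a + b) ^ 2 ≤ (4 * (a + b - m) + (a + b)) * m := by linarith
        _ ≤ (4 * e + (a + b)) * m := mul_le_mul_of_nonneg_right (by linarith) hm.le
  linarith

theorem neg_add_div_four_le_blockWeight_sub_mul_div [Fintype I] [Fintype J] {A : I → J → R}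
    (hA : ∀ i j, 0 ≤ A i j) (hm : 0 < blockWeight A univ univ) (s : Finset I) (t : Finset J) :
    -((blockWeight A s univ + blockWeight A univ t) / 4) ≤
      blockWeight A s t -
        blockWeight A s univ * blockWeight A univ t / blockWeight A univ univ := by
  have row_le : blockWeight A s univ ≤ blockWeight A univ univ :=
    blockWeight_mono hA (subset_univ s) Subset.rfl
  have col_le : blockWeight A univ t ≤ blockWeight A univ univ :=
    blockWeight_mono hA Subset.rfl (subset_univ t)
  have expected_le := mul_div_le_add_add_div_four hm
    (add_nonneg (blockWeight_nonneg hA s univ) (blockWeight_nonneg hA univ t))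
    (by linarith) (blockWeight_nonneg hA s t) (blockWeight_add_blockWeight_le hA s t)
  linarith

/-- For `I = J` and `η = ξ` this bounds the modularity of a weighted directed graph; for `A` the
biadjacency matrix of a bipartite graph it bounds Barber's bipartite modularity. -/
theorem modularity_ge_neg_half_general [Fintype I] [Fintype J]
    (A : I → J → R) (hA : ∀ i j, 0 ≤ A i j)
    (kRow : I → R) (hkRow : ∀ i, kRow i = ∑ j, A i j)
    (kCol : J → R) (hkCol : ∀ j, kCol j = ∑ i, A i j)
    (m : R) (hm : m = ∑ i, ∑ j, A i j) (hm0 : 0 < m)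
    (η : I → L) (ξ : J → L) :
    (1 / m) * ∑ i, ∑ j, (A i j - kRow i * kCol j / m) * (if η i = ξ j then (1 : R) else 0) ≥
      -(1 / 2) := by
  obtain rfl : m = blockWeight A univ univ := hm
  let S : Finset L := univ.image η ∪ univ.image ξ
  have hη (i : I) : η i ∈ S := mem_union_left _ (mem_image_of_mem η (mem_univ i))
  have hξ (j : J) : ξ j ∈ S := mem_union_right _ (mem_image_of_mem ξ (mem_univ j))
  have sum_kRow (s : Finset I) : ∑ i ∈ s, kRow i = blockWeight A s univ :=
    sum_congr rfl fun i _ ↦ hkRow i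
  have sum_kCol (t : Finset J) : ∑ j ∈ t, kCol j = blockWeight A univ t :=
    (sum_congr rfl fun j _ ↦ hkCol j).trans (blockWeight_comm A univ t).symm
  rw [ge_iff_le, one_div_mul_eq_div, le_div_iff₀ hm0, sum_sum_mul_ite_eq_sum_fibers _ hη]
  simp only [sum_sum_sub_mul_div, sum_kRow, sum_kCol]
  calc
    -(1 / 2) * blockWeight A univ univ
      = ∑ c ∈ S, -((blockWeight A {i | η i = c} univ + blockWeight A univ {j | ξ j = c}) / 4) := by
        rw [sum_neg_distrib, ← sum_div, sum_add_distrib, sum_blockWeight_row_fibers A hη,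
          sum_blockWeight_col_fibers A hξ]
        ring
    _ ≤ _ := sum_le_sum fun c _ ↦ neg_add_div_four_le_blockWeight_sub_mul_div hA hm0 _ _

end Field

end Modularity

/-- For every finite simple undirected graph `G` with `l ≥ 1` edges (given by a symmetric
0/1 adjacency matrix `A` with zero diagonal, degrees `k i = ∑ j, A i j`, and
`l = (1/2) ∑ i j, A i j`) and every partition `η : V → L` of its vertices into communities,
the modularity `Q(η) = (1/(2l)) ∑ i j, (A i j − k i * k j/(2l)) δ(η i, η j)` satisfies
`Q(η) ≥ −1/2`. -/
theorem modularity_ge_neg_half {V : Type*} [Fintype V] {L : Type*}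
    (A : V → V → ℝ)
    (hsym : ∀ i j, A i j = A j i)
    (h01 : ∀ i j, A i j = 0 ∨ A i j = 1)
    (hdiag : ∀ i, A i i = 0)
    (k : V → ℝ) (hk : ∀ i, k i = ∑ j, A i j)
    (l : ℝ) (hl : l = (1 / 2) * ∑ i, ∑ j, A i j)
    (hl1 : 1 ≤ l)
    (η : V → L) :
    (1 / (2 * l)) *
        ∑ i, ∑ j, (A i j - k i * k j / (2 * l)) * (if η i = η j then (1 : ℝ) else 0) ≥ -(1 / 2) :=
  modularity_ge_neg_half_general A (fun i j ↦ (h01 i j).elim Eq.ge (zero_le_one.trans_eq ·.symm))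
    k hk k (fun j ↦ by simp only [hk, hsym j]) (2 * l) (by linarith) (by linarith) η η
end

section
/- Reparameterization invariance of second-level iterated integrals: let φ : [a, b] → [c, d] be continuously differentiable, strictly increasing, with φ(a) = c and φ(b) = d, and let f, g : [c, d] → ℝ be continuously differentiable. Then ∫_a^b (g ∘ φ)'(s) · ( ∫_a^s (f ∘ φ)'(u) du ) ds = ∫_c^d g'(s) · ( ∫_c^s f'(u) du ) ds. -/
/-!
By the fundamental theorem of calculus the inner integral is an increment of `f`, so the iterated
integral over `[c, d]` is `∫ ψ dg` with `ψ = f - f c`, and the one over `[a, b]` is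
`∫ (ψ ∘ φ) d(g ∘ φ)`. The two agree by substitution.
-/

open Set
open scoped Interval

section Reparameterization

variable {E A : Type*} [NormedAddCommGroup E] [NormedSpace ℝ E] [NormedRing A] [NormedAlgebra ℝ A]
  {a b : ℝ} {J : Set ℝ} {φ : ℝ → ℝ} {h : ℝ → E} {f g ψ : ℝ → A}

lemma continuousOn_derivWithin_of_ordConnected (hJ : J.OrdConnected) (hh : ContDiffOn ℝ 1 h J) :
    ContinuousOn (derivWithin h J) J := by
  rcases J.subsingleton_or_nontrivial with hJ_sub | hJ_nontriv
  · exact hJ_sub.continuousOn _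
  · have hJ_interior := hJ.convex.nontrivial_iff_nonempty_interior.1 hJ_nontriv
    exact hh.continuousOn_derivWithin (uniqueDiffOn_convex hJ.convex hJ_interior) le_rfl

lemma integral_mul_integral_deriv [CompleteSpace A] (hf : ContDiffOn ℝ 1 f [[a, b]]) :
    ∫ s in a..b, ψ s * ∫ u in a..s, deriv f u = ∫ s in a..b, ψ s * (f s - f a) := by
  refine intervalIntegral.integral_congr fun s hs => ?_
  simp only [intervalIntegral.integral_deriv_of_contDiffOn_uIcc
    (hf.mono (uIcc_subset_uIcc_left hs))]

/- At an interior time where `φ` touches an endpoint of `J`, `g` need not be differentiable, but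
`g ∘ φ` is: nearby values of `φ` stay in `J`, so the derivative of `g` within `J` suffices. -/
lemma deriv_comp_of_mapsTo {I : Set ℝ} {φ' s : ℝ} (hh : DifferentiableWithinAt ℝ h J (φ s))
    (hφ : HasDerivAt φ φ' s) (hφJ : MapsTo φ I J) (hI : I ∈ nhds s) :
    deriv (h ∘ φ) s = φ' • derivWithin h J (φ s) :=
  ((hh.hasDerivWithinAt.scomp s hφ.hasDerivWithinAt hφJ).hasDerivAt hI).deriv

lemma integral_deriv_comp_mul_comp (hJ : J.OrdConnected) (hφ : ContDiffOn ℝ 1 φ [[a, b]])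
    (hφJ : MapsTo φ [[a, b]] J) (hg : ContDiffOn ℝ 1 g J) (hψ : ContinuousOn ψ J) :
    ∫ s in a..b, deriv (g ∘ φ) s * ψ (φ s) = ∫ t in φ a..φ b, deriv g t * ψ t := by
  have hφ_deriv : ∀ s ∈ uIoo a b, HasDerivAt φ (derivWithin φ [[a, b]] s) s := fun s hs =>
    (hφ.differentiableOn one_ne_zero s (uIoo_subset_uIcc_self hs)).hasDerivWithinAt.hasDerivAt
      (Icc_mem_nhds hs.1 hs.2)
  have hφ_ends : [[φ a, φ b]] ⊆ J := hJ.uIcc_subset (hφJ left_mem_uIcc) (hφJ right_mem_uIcc)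
  calc ∫ s in a..b, deriv (g ∘ φ) s * ψ (φ s)
      = ∫ s in a..b, derivWithin φ [[a, b]] s • ((fun t => derivWithin g J t * ψ t) ∘ φ) s := by
        refine intervalIntegral.integral_congr_uIoo fun s hs => ?_
        have hg_diff := hg.differentiableOn one_ne_zero (φ s) (hφJ (uIoo_subset_uIcc_self hs))
        simp only [deriv_comp_of_mapsTo hg_diff (hφ_deriv s hs) hφJ (Icc_mem_nhds hs.1 hs.2),
          Function.comp_apply, smul_mul_assoc]
    _ = ∫ t in φ a..φ b, derivWithin g J t * ψ t :=
        intervalIntegral.integral_deriv_smul_comp'' hφ.continuousOn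
          (fun s hs => (hφ_deriv s hs).hasDerivWithinAt)
          (continuousOn_derivWithin_of_ordConnected ordConnected_uIcc hφ)
          (((continuousOn_derivWithin_of_ordConnected hJ hg).mul hψ).mono hφJ.image_subset)
    _ = ∫ t in φ a..φ b, deriv g t * ψ t := by
        refine intervalIntegral.integral_congr_uIoo fun t ht => ?_
        simp only [derivWithin_of_mem_nhds
          (Filter.mem_of_superset (Icc_mem_nhds ht.1 ht.2) hφ_ends)]

theorem second_level_iterated_integral_reparam_invariant_general [CompleteSpace A]
    (hJ : J.OrdConnected) (hφ : ContDiffOn ℝ 1 φ [[a, b]]) (hφJ : MapsTo φ [[a, b]] J)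
    (hf : ContDiffOn ℝ 1 f J) (hg : ContDiffOn ℝ 1 g J) :
    ∫ s in a..b, deriv (g ∘ φ) s * ∫ u in a..s, deriv (f ∘ φ) u =
      ∫ s in φ a..φ b, deriv g s * ∫ u in φ a..s, deriv f u := by
  have hφ_ends : [[φ a, φ b]] ⊆ J := hJ.uIcc_subset (hφJ left_mem_uIcc) (hφJ right_mem_uIcc)
  rw [integral_mul_integral_deriv (hf.comp hφ hφJ), integral_mul_integral_deriv (hf.mono hφ_ends)]
  exact integral_deriv_comp_mul_comp hJ hφ hφJ hg (hf.continuousOn.sub continuousOn_const)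

end Reparameterization

/-- Reparameterization invariance of second-level iterated integrals: let
`φ : [a, b] → [c, d]` be continuously differentiable, strictly increasing, with `φ a = c`
and `φ b = d`, and let `f, g : [c, d] → ℝ` be continuously differentiable. Then
`∫_a^b (g ∘ φ)' s * (∫_a^s (f ∘ φ)' u du) ds = ∫_c^d g' s * (∫_c^s f' u du) ds`. -/
theorem second_level_iterated_integral_reparam_invariant
    (a b c d : ℝ) (hab : a ≤ b) (φ f g : ℝ → ℝ)
    (hφmaps : Set.MapsTo φ (Set.Icc a b) (Set.Icc c d))
    (hφ : ContDiffOn ℝ 1 φ (Set.Icc a b))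
    (hφmono : StrictMonoOn φ (Set.Icc a b))
    (hφa : φ a = c) (hφb : φ b = d)
    (hf : ContDiffOn ℝ 1 f (Set.Icc c d))
    (hg : ContDiffOn ℝ 1 g (Set.Icc c d)) :
    ∫ s in a..b, deriv (g ∘ φ) s * ∫ u in a..s, deriv (f ∘ φ) u =
      ∫ s in c..d, deriv g s * ∫ u in c..s, deriv f u := by
  subst hφa hφb
  rw [← uIcc_of_le hab] at hφ hφmaps
  exact second_level_iterated_integral_reparam_invariant_general ordConnected_Icc hφ hφmaps hf hg
end
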